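/- Let k be a positive integer and let T_k = (V, root, par) be a rooted directed tree in which card(Chi(root)) = k and every vertex other than root has exactly one child (so card(Chi^⟨j⟩(root)) = k for all j ≥ 1). Then ‖Λ_{T_k} e_root‖² = 1 + k·(π²/6 − 1), where e_root ∈ ℓ²(V) is the indicator function of the root. -/

import Mathlib

noncomputable section

open scoped ENNReal

/-- A rooted directed tree encoded by a vertex set `V`, a root, and a parent map. -/
structure TreeData (V : Type) where
  root : V
  par : V → V
  par_root : par root = root
  hroot : ∀ v : V, ∃ n : ℕ, par^[n] v = root

namespace TreeData

variable {V : Type}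

open scoped Classical in
/-- The depth of a vertex: the least `n` with `par^[n] v = root`. -/
def dep (T : TreeData V) (v : V) : ℕ := Nat.find (T.hroot v)

/-- The Cesàro map `Λ_T`. -/
def cesaro (T : TreeData V) (f : V → ℂ) : V → ℂ := fun v =>
  ((T.dep v : ℂ) + 1)⁻¹ * ∑ j ∈ Finset.range (T.dep v + 1), f (T.par^[j] v)

/-- The `n`-th level `Chi^⟨n⟩(root)`: vertices of depth `n`. -/
def level (T : TreeData V) (n : ℕ) : Set V := {v : V | T.dep v = n}

/-- The set of children of a vertex. -/
def chi (T : TreeData V) (u : V) : Set V := {v : V | v ≠ T.root ∧ T.par v = u}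

end TreeData

/-- The Hilbert space `ℓ²(V)` of square-summable complex functions on `V`. -/
abbrev L2 (V : Type) : Type := lp (fun _ : V => ℂ) 2

namespace TreeData

theorem dep_root {V : Type} (T : TreeData V) : T.dep T.root = 0 := by
  classical
  unfold dep
  rw [Nat.find_eq_zero]
  rfl

theorem dep_succ {V : Type} (T : TreeData V) (v : V) (hv : v ≠ T.root) :
    T.dep v = T.dep (T.par v) + 1 := by
  classical
  unfold dep
  exact Nat.find_comp_succ (T.hroot v) (T.hroot (T.par v)) hv

theorem dep_eq_zero {V : Type} (T : TreeData V) (v : V) : T.dep v = 0 ↔ v = T.root := by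
  constructor
  · intro h
    by_contra hv
    rw [T.dep_succ v hv] at h
    omega
  · rintro rfl
    exact T.dep_root

theorem level_zero {V : Type} (T : TreeData V) : T.level 0 = {T.root} := by
  ext v
  simp [level, dep_eq_zero]

theorem level_one {V : Type} (T : TreeData V) : T.level 1 = T.chi T.root := by
  ext v
  simp only [level, chi, Set.mem_setOf_eq]
  by_cases hv : v = T.root
  · subst hv
    simp [dep_root]
  · rw [T.dep_succ v hv]
    simp [hv, dep_eq_zero]

theorem level_card {V : Type} (T : TreeData V) (k : ℕ)
    (hroot : (T.chi T.root).encard = k)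
    (hother : ∀ v : V, v ≠ T.root → (T.chi v).encard = 1) (n : ℕ) :
    (T.level (n + 1)).encard = k := by
  induction n with
  | zero => rw [zero_add, level_one, hroot]
  | succ n ih =>
    rw [← ih]
    have hne : ∀ m, ∀ v ∈ T.level (m + 1), v ≠ T.root := by
      intro m v hv h
      have h1 : T.dep v = m + 1 := hv
      rw [h, dep_root] at h1
      omega
    have hmaps : ∀ v ∈ T.level (n + 1 + 1), T.par v ∈ T.level (n + 1) := by
      intro v hv
      have h1 : T.dep v = n + 1 + 1 := hv
      rw [T.dep_succ v (hne _ v hv)] at h1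
      show T.dep (T.par v) = n + 1
      omega
    have hinj : Set.InjOn T.par (T.level (n + 1 + 1)) := by
      intro v hv w hw hvw
      obtain ⟨x, hx⟩ := Set.encard_eq_one.1 (hother (T.par v) (hne _ _ (hmaps v hv)))
      have h1 : v ∈ T.chi (T.par v) := ⟨hne _ v hv, rfl⟩
      have h2 : w ∈ T.chi (T.par v) := ⟨hne _ w hw, hvw.symm⟩
      rw [hx] at h1 h2
      rw [Set.mem_singleton_iff] at h1 h2
      rw [h1, h2]
    rw [← hinj.encard_image]
    congr 1
    ext u
    constructor
    · rintro ⟨v, hv, rfl⟩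
      exact hmaps v hv
    · intro hu
      obtain ⟨x, hx⟩ := Set.encard_eq_one.1 (hother u (hne _ u hu))
      have h1 : x ∈ T.chi u := by rw [hx]; rfl
      refine ⟨x, ?_, h1.2⟩
      show T.dep x = _
      rw [T.dep_succ x h1.1, h1.2]
      have : T.dep u = n + 1 := hu
      omega

theorem par_dep {V : Type} (T : TreeData V) (v : V) : T.par^[T.dep v] v = T.root := by
  classical
  exact Nat.find_spec (T.hroot v)

theorem par_lt_dep {V : Type} (T : TreeData V) (v : V) (j : ℕ) (hj : j < T.dep v) :
    T.par^[j] v ≠ T.root := by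
  classical
  exact Nat.find_min (T.hroot v) hj

theorem cesaro_single {V : Type} [DecidableEq V] (T : TreeData V) (v : V) :
    T.cesaro ⇑(lp.single 2 T.root (1 : ℂ) : L2 V) v = ((T.dep v : ℂ) + 1)⁻¹ := by
  classical
  unfold cesaro
  rw [Finset.sum_range_succ, Finset.sum_eq_zero]
  · have : T.par^[T.dep v] v = T.root := T.par_dep v
    rw [this]
    simp
  · intro j hj
    have : T.par^[j] v ≠ T.root := T.par_lt_dep v j (Finset.mem_range.1 hj)
    simp [lp.single_apply, Pi.single_apply, this]

theorem hasSum_dep {V : Type} (T : TreeData V) (k : ℕ)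
    (hroot : (T.chi T.root).encard = k)
    (hother : ∀ v : V, v ≠ T.root → (T.chi v).encard = 1) :
    HasSum (fun v => (((T.dep v : ℝ) + 1) ^ 2)⁻¹) (1 + k * (Real.pi ^ 2 / 6 - 1)) := by
  have hz : HasSum (fun n : ℕ => (k : ℝ) * (((n : ℝ) + 1 + 1) ^ 2)⁻¹)
      (k * (Real.pi ^ 2 / 6 - 1)) := by
    apply HasSum.mul_left
    have := (hasSum_nat_add_iff' 2).2 hasSum_zeta_two
    simp only [Finset.sum_range_succ] at this
    have e1 : (fun n : ℕ => (((n : ℝ) + 1 + 1) ^ 2)⁻¹) = fun n : ℕ => 1 / ((n + 2 : ℕ) : ℝ) ^ 2 := by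
      funext n
      push_cast
      rw [one_div, add_assoc, one_add_one_eq_two]
    rw [e1]
    have e2 : Real.pi ^ 2 / 6 - 1 = Real.pi ^ 2 / 6 - (∑ i ∈ Finset.range 0, 1 / (i : ℝ) ^ 2
        + 1 / ((0 : ℕ) : ℝ) ^ 2 + 1 / ((1 : ℕ) : ℝ) ^ 2) := by
      simp
    rw [e2]
    exact this
  have hc : HasSum (fun n : ℕ => ((T.level n).ncard : ℝ) * (((n : ℝ) + 1) ^ 2)⁻¹)
      (1 + k * (Real.pi ^ 2 / 6 - 1)) := by
    rw [← hasSum_nat_add_iff' 1]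
    have e1 : (fun n : ℕ => ((T.level (n + 1)).ncard : ℝ) * ((((n + 1 : ℕ) : ℝ) + 1) ^ 2)⁻¹)
        = fun n : ℕ => (k : ℝ) * (((n : ℝ) + 1 + 1) ^ 2)⁻¹ := by
      funext n
      have : (T.level (n + 1)).ncard = k := by
        rw [Set.ncard, level_card T k hroot hother n]; simp
      rw [this]
      push_cast
      rfl
    rw [e1]
    have e2 : 1 + (k : ℝ) * (Real.pi ^ 2 / 6 - 1) - ∑ i ∈ Finset.range 1,
        ((T.level i).ncard : ℝ) * (((i : ℝ) + 1) ^ 2)⁻¹ = k * (Real.pi ^ 2 / 6 - 1) := by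
      simp [level_zero]
    rw [e2]
    exact hz
  have hfin : ∀ n, (T.level n).Finite := by
    intro n
    cases n with
    | zero => rw [level_zero]; exact Set.finite_singleton _
    | succ n =>
      apply Set.finite_of_encard_eq_coe (k := k)
      exact level_card T k hroot hother n
  rw [← (Equiv.sigmaFiberEquiv T.dep).hasSum_iff]
  have hfib : ∀ n : ℕ, HasSum (fun x : {v // T.dep v = n} =>
      ((fun v => (((T.dep v : ℝ) + 1) ^ 2)⁻¹) ∘ (Equiv.sigmaFiberEquiv T.dep)) ⟨n, x⟩)
      (((T.level n).ncard : ℝ) * (((n : ℝ) + 1) ^ 2)⁻¹) := by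
    intro n
    haveI : Fintype {v // T.dep v = n} := (hfin n).fintype
    have e : (fun x : {v // T.dep v = n} =>
      ((fun v => (((T.dep v : ℝ) + 1) ^ 2)⁻¹) ∘ (Equiv.sigmaFiberEquiv T.dep)) ⟨n, x⟩)
        = fun _ => (((n : ℝ) + 1) ^ 2)⁻¹ := by
      funext x
      obtain ⟨x, rfl⟩ := x
      rfl
    rw [e]
    have := hasSum_fintype (fun _ : {v // T.dep v = n} => (((n : ℝ) + 1) ^ 2)⁻¹)
    convert this using 1
    rw [Finset.sum_const, nsmul_eq_mul, Finset.card_univ, ← Nat.card_eq_fintype_card]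
    rfl
  have hs : Summable ((fun v => (((T.dep v : ℝ) + 1) ^ 2)⁻¹) ∘ (Equiv.sigmaFiberEquiv T.dep)) := by
    rw [summable_sigma_of_nonneg (fun x => by simp only [Function.comp]; positivity)]
    refine ⟨fun n => (hfib n).summable, ?_⟩
    convert hc.summable using 2 with n
    exact (hfib n).tsum_eq
  have := hs.hasSum.sigma hfib
  rw [← this.unique hc]
  exact hs.hasSum

end TreeData

/-- For the tree `T_k` whose root has `k` children and in which every other
vertex has exactly one child, the Cesàro map satisfies `‖Λ_{T_k} e_root‖² = 1 + k (π²/6 - 1)`. -/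
theorem cesaro_norm_sq_at_root {V : Type} [Countable V] [Infinite V] [DecidableEq V]
    (T : TreeData V) (k : ℕ) (hk : 0 < k)
    (hroot : (T.chi T.root).encard = k)
    (hother : ∀ v : V, v ≠ T.root → (T.chi v).encard = 1) :
    ∃ h : Memℓp (T.cesaro ⇑(lp.single 2 T.root (1 : ℂ) : L2 V)) 2,
      ‖(⟨T.cesaro ⇑(lp.single 2 T.root (1 : ℂ) : L2 V), h⟩ : L2 V)‖ ^ 2
        = 1 + k * (Real.pi ^ 2 / 6 - 1) := by
  have hs := T.hasSum_dep k hroot hother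
  have e : ∀ v, ‖T.cesaro ⇑(lp.single 2 T.root (1 : ℂ) : L2 V) v‖ ^ (2 : ℝ≥0∞).toReal
      = (((T.dep v : ℝ) + 1) ^ 2)⁻¹ := by
    intro v
    rw [T.cesaro_single v, norm_inv]
    have : ‖(T.dep v : ℂ) + 1‖ = (T.dep v : ℝ) + 1 := by
      exact_mod_cast Complex.norm_natCast (T.dep v + 1)
    rw [this]
    simp
  have h : Memℓp (T.cesaro ⇑(lp.single 2 T.root (1 : ℂ) : L2 V)) 2 := by
    apply memℓp_gen
    simp only [e]
    exact hs.summable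
  refine ⟨h, ?_⟩
  have h2 := lp.norm_rpow_eq_tsum (p := 2) (by norm_num)
    (⟨T.cesaro ⇑(lp.single 2 T.root (1 : ℂ) : L2 V), h⟩ : L2 V)
  simp only [e] at h2
  rw [hs.tsum_eq] at h2
  rw [← h2]
  simp
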